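/- arXiv:1101.3135 — 2 statements merged into one kernel-verified Lean document; each statement's English description precedes it below -/
import Mathlib

section
/- For all integers n ≥ 1 and m ≥ 1, the polynomial A_{n,m} has the closed form A_{n,m}(t) = m! Σ_{j=0}^{n} (−1)^{n+j} (m+1)_j S(n+1, j+1) (1−t)^{n−j}, where S(·,·) is the Stirling number of the second kind and (a)_k is the Pochhammer symbol. -/
open Polynomial

noncomputable section

/-- The polylogarithm of negative integer order: `Li_{−n}(t) = ∑_{k=1}^∞ k^n t^k`
(the `k = 0` term vanishes for `n ≥ 1`). -/
def fbhLi (n : ℕ) (t : ℂ) : ℂ := ∑' k : ℕ, (k : ℂ) ^ n * t ^ k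

/-- The Stirling number of the second kind, given by
`k!·S(n,k) = ∑_{i=0}^{k} (−1)^i C(k,i) (k−i)^n`. -/
def stirlingS2 (n k : ℕ) : ℝ :=
  (∑ i ∈ Finset.range (k + 1), (-1 : ℝ) ^ i * (k.choose i) * ((k - i : ℕ) : ℝ) ^ n) /
    (Nat.factorial k : ℝ)

/-!
Dividing the classical expansion of `X ^ (n + 1)` in falling factorials by `X` expands `X ^ n` in
the falling factorials of `X - 1`. At `X = -k` these become signed binomial coefficients
`(k + j).choose j`, whose generating functions are `1 / (1 - t) ^ (j + 1)`; hence `Li_{-n}` is a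
combination of the functions `j! / (1 - t) ^ (j + 1)`. Each of these is the `j`-th derivative of
`1 / (1 - t)`, so `m` further derivatives turn it into `(j + m)! / (1 - t) ^ (j + m + 1)`, and
`(j + m)! = m! (m + 1)_j`.

The alternating sum defining `S(n, k)` is an iterated forward difference of `x ↦ x ^ n` at `0`,
which the same falling factorial expansion evaluates.
-/

section Stirling

variable (R : Type*) [CommRing R]

lemma X_pow_eq_sum_stirlingSecond_mul_descPochhammer (n : ℕ) :
    (X : R[X]) ^ n =
      ∑ j ∈ Finset.range (n + 1), (Nat.stirlingSecond n j : R[X]) * descPochhammer R j := by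
  induction n with
  | zero => simp
  | succ n ih =>
    have mul_X_eq (j : ℕ) :
        descPochhammer R j * X = descPochhammer R (j + 1) + (j : R[X]) * descPochhammer R j := by
      rw [descPochhammer_succ_right]
      ring
    have shift : ∑ j ∈ Finset.range (n + 1),
          (j : R[X]) * (Nat.stirlingSecond n j * descPochhammer R j) =
        ∑ j ∈ Finset.range (n + 1),
          ((j + 1 : ℕ) : R[X]) * (Nat.stirlingSecond n (j + 1) * descPochhammer R (j + 1)) := by
      have h := Finset.sum_range_succ' (fun j : ℕ ↦
        (j : R[X]) * (Nat.stirlingSecond n j * descPochhammer R j)) (n + 1)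
      rw [Finset.sum_range_succ, Nat.stirlingSecond_eq_zero_of_lt n.lt_succ_self] at h
      simpa using h
    calc (X : R[X]) ^ (n + 1)
      _ = ∑ j ∈ Finset.range (n + 1), (Nat.stirlingSecond n j : R[X]) * descPochhammer R (j + 1) +
          ∑ j ∈ Finset.range (n + 1),
            (j : R[X]) * (Nat.stirlingSecond n j * descPochhammer R j) := by
        rw [pow_succ, ih, Finset.sum_mul, ← Finset.sum_add_distrib]
        refine Finset.sum_congr rfl fun j _ ↦ ?_
        rw [mul_assoc, mul_X_eq]
        ring
      _ = ∑ j ∈ Finset.range (n + 1),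
          (Nat.stirlingSecond (n + 1) (j + 1) : R[X]) * descPochhammer R (j + 1) := by
        rw [shift, ← Finset.sum_add_distrib]
        refine Finset.sum_congr rfl fun j _ ↦ ?_
        rw [Nat.stirlingSecond_succ_succ]
        push_cast
        ring
      _ = _ := by simp [Finset.sum_range_succ' _ (n + 1)]

lemma X_pow_eq_sum_stirlingSecond_succ_mul_descPochhammer_comp (n : ℕ) :
    (X : R[X]) ^ n = ∑ j ∈ Finset.range (n + 1),
      (Nat.stirlingSecond (n + 1) (j + 1) : R[X]) * (descPochhammer R j).comp (X - 1) := by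
  refine isRegular_X.left ?_
  change X * X ^ n = X * _
  rw [← pow_succ', X_pow_eq_sum_stirlingSecond_mul_descPochhammer, Finset.sum_range_succ',
    Finset.mul_sum]
  simp [descPochhammer_succ_left, mul_left_comm]

lemma natCast_pow_eq_sum_stirlingSecond_mul_choose (n k : ℕ) :
    (k : R) ^ n = ∑ j ∈ Finset.range (n + 1),
      ((j.factorial * Nat.stirlingSecond n j : ℕ) : R) * k.choose j := by
  have h := congrArg (eval (k : R)) (X_pow_eq_sum_stirlingSecond_mul_descPochhammer R n)
  simp only [eval_pow, eval_X, eval_finsetSum, eval_mul, eval_natCast,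
    descPochhammer_eval_eq_descFactorial, Nat.descFactorial_eq_factorial_mul_choose] at h
  rw [h]
  refine Finset.sum_congr rfl fun j _ ↦ ?_
  push_cast
  ring

lemma natCast_pow_eq_sum_stirlingSecond_succ_mul_choose_add (n k : ℕ) :
    (k : R) ^ n = ∑ j ∈ Finset.range (n + 1),
      (-1) ^ (n + j) * (Nat.stirlingSecond (n + 1) (j + 1) : R) * j.factorial *
        (k + j).choose j := by
  have eval_neg (j : ℕ) : (descPochhammer R j).eval (-(k : R) - 1) =
      (-1) ^ j * (j.factorial * (k + j).choose j) := by
    have neg_eq : -(k : R) - 1 = -((k + 1 : ℕ) : R) := by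
      push_cast
      ring
    have reflect := ascPochhammer_eval_neg_eq_descPochhammer R (-((k + 1 : ℕ) : R)) j
    rw [neg_neg, ← Nat.cast_ascFactorial, Nat.ascFactorial_eq_factorial_mul_choose] at reflect
    rw [neg_eq, ← Nat.cast_mul, reflect, ← mul_assoc, ← mul_pow]
    simp
  have h := congrArg (eval (-(k : R)))
    (X_pow_eq_sum_stirlingSecond_succ_mul_descPochhammer_comp R n)
  simp only [eval_pow, eval_X, eval_finsetSum, eval_mul, eval_natCast, eval_comp, eval_sub,
    eval_one, eval_neg] at h
  calc (k : R) ^ n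
    _ = (-1) ^ n * (-(k : R)) ^ n := by rw [← mul_pow, neg_one_mul, neg_neg]
    _ = _ := by
      rw [h, Finset.mul_sum]
      refine Finset.sum_congr rfl fun j _ ↦ ?_
      ring

lemma fwdDiff_iter_pow_zero (n k : ℕ) :
    (fwdDiff 1)^[k] (fun x : ℕ ↦ (x : ℤ) ^ n) 0 = k.factorial * Nat.stirlingSecond n k := by
  have newton : (fun x : ℕ ↦ (x : ℤ) ^ n) = ∑ j ∈ Finset.range (n + 1),
      ((j.factorial * Nat.stirlingSecond n j : ℕ) : ℤ) • fun x : ℕ ↦ (x.choose j : ℤ) := by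
    ext x
    simp [natCast_pow_eq_sum_stirlingSecond_mul_choose ℤ n x]
  rw [newton, fwdDiff_iter_finsetSum, Finset.sum_apply]
  simp only [fwdDiff_iter_const_smul, Pi.smul_apply, fwdDiff_iter_choose_zero, smul_eq_mul,
    mul_ite, mul_one, mul_zero, Finset.sum_ite_eq, Finset.mem_range]
  split_ifs with hk
  · push_cast
    rfl
  · rw [Nat.stirlingSecond_eq_zero_of_lt (by lia)]
    simp

end Stirling

lemma stirlingS2_eq_stirlingSecond (n k : ℕ) : stirlingS2 n k = Nat.stirlingSecond n k := by
  have h := fwdDiff_iter_pow_zero n k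
  rw [fwdDiff_iter_eq_sum_shift, ← Finset.sum_range_reflect] at h
  have hsum : ∑ i ∈ Finset.range (k + 1),
      (-1 : ℝ) ^ i * (k.choose i) * ((k - i : ℕ) : ℝ) ^ n =
        k.factorial * Nat.stirlingSecond n k := by
    rw [← Int.cast_inj (α := ℝ)] at h
    push_cast at h
    rw [← h]
    refine Finset.sum_congr rfl fun i hi ↦ ?_
    have hik : i ≤ k := Finset.mem_range_succ_iff.mp hi
    simp [Nat.choose_symm hik, Nat.sub_sub_self hik]
  rw [stirlingS2, hsum, mul_div_cancel_left₀ _ (Nat.cast_ne_zero.mpr k.factorial_ne_zero)]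

lemma hasSum_pow_mul_geometric {𝕜 : Type*} [NormedField 𝕜] [CompleteSpace 𝕜] (n : ℕ) {t : 𝕜}
    (ht : ‖t‖ < 1) :
    HasSum (fun k : ℕ ↦ (k : 𝕜) ^ n * t ^ k) (∑ j ∈ Finset.range (n + 1),
      (-1) ^ (n + j) * (Nat.stirlingSecond (n + 1) (j + 1) : 𝕜) *
        (j.factorial / (1 - t) ^ (j + 1))) := by
  simp only [natCast_pow_eq_sum_stirlingSecond_succ_mul_choose_add 𝕜 n, Finset.sum_mul]
  refine hasSum_sum fun j _ ↦ ?_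
  simpa only [mul_assoc, mul_one_div, mul_div_assoc] using
    (hasSum_choose_mul_geometric_of_norm_lt_one j ht).mul_left
      ((-1) ^ (n + j) * (Nat.stirlingSecond (n + 1) (j + 1) : 𝕜) * j.factorial)

section Derivatives

variable {𝕜 : Type*} [NontriviallyNormedField 𝕜]

lemma iteratedDeriv_inv_one_sub (k : ℕ) :
    iteratedDeriv k (fun z : 𝕜 ↦ (1 - z)⁻¹) = fun z ↦ (k.factorial : 𝕜) / (1 - z) ^ (k + 1) := by
  have zpow_eq (x : 𝕜) : x ^ (-1 - k : ℤ) = (x ^ (k + 1))⁻¹ := by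
    rw [← zpow_natCast, ← zpow_neg]
    push_cast
    ring_nf
  ext z
  rw [iteratedDeriv_comp_const_sub k Inv.inv 1]
  simp only [iteratedDeriv_eq_iterate, iter_deriv_inv, zpow_eq, smul_eq_mul]
  rw [mul_assoc, ← mul_assoc, ← mul_pow]
  simp [div_eq_mul_inv]

lemma iteratedDeriv_factorial_div_one_sub_pow (m j : ℕ) :
    iteratedDeriv m (fun z : 𝕜 ↦ (j.factorial : 𝕜) / (1 - z) ^ (j + 1)) =
      fun z ↦ ((j + m).factorial : 𝕜) / (1 - z) ^ (j + m + 1) := by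
  rw [← iteratedDeriv_inv_one_sub, ← iteratedDeriv_inv_one_sub]
  simp only [iteratedDeriv_eq_iterate, ← Function.iterate_add_apply, add_comm]

end Derivatives

lemma iteratedDeriv_fbhLi (n m : ℕ) {t : ℂ} (ht : ‖t‖ < 1) :
    iteratedDeriv m (fbhLi n) t = ∑ j ∈ Finset.range (n + 1),
      (-1) ^ (n + j) * (Nat.stirlingSecond (n + 1) (j + 1) : ℂ) *
        ((j + m).factorial / (1 - t) ^ (j + m + 1)) := by
  have partial_fractions : fbhLi n =ᶠ[nhds t] fun s ↦ ∑ j ∈ Finset.range (n + 1),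
      (-1) ^ (n + j) * (Nat.stirlingSecond (n + 1) (j + 1) : ℂ) *
        (j.factorial / (1 - s) ^ (j + 1)) := by
    filter_upwards [continuous_norm.continuousAt.eventually_lt_const ht] with s hs
    exact (hasSum_pow_mul_geometric n hs).tsum_eq
  have one_sub_ne_zero : 1 - t ≠ 0 := (isUnit_one_sub_of_norm_lt_one ht).ne_zero
  rw [partial_fractions.iteratedDeriv_eq, iteratedDeriv_fun_sum]
  · simp only [iteratedDeriv_const_mul_field, iteratedDeriv_factorial_div_one_sub_pow]
  · intro j _
    fun_prop (disch := exact pow_ne_zero _ one_sub_ne_zero)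

/-- The closed form of the numerator of the `m`-th derivative of `Li_{−n}`. It is stated for the
denominator `(1 - t) ^ (n + m + 1)`, which is a common denominator for all the partial fractions of
that derivative. -/
def polylogDerivNumerator (n m : ℕ) : ℝ[X] :=
  C (Nat.factorial m : ℝ) * ∑ j ∈ Finset.range (n + 1),
    C ((-1 : ℝ) ^ (n + j) * (((ascPochhammer ℕ j).eval (m + 1) : ℕ) : ℝ) *
      stirlingS2 (n + 1) (j + 1)) * (1 - X) ^ (n - j)

lemma iteratedDeriv_fbhLi_eq_aeval_div (n m : ℕ) {t : ℂ} (ht : ‖t‖ < 1) :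
    iteratedDeriv m (fbhLi n) t =
      aeval t (polylogDerivNumerator n m) / (1 - t) ^ (n + m + 1) := by
  rw [iteratedDeriv_fbhLi n m ht, polylogDerivNumerator, map_mul, map_sum, mul_div_assoc,
    Finset.sum_div, Finset.mul_sum]
  refine Finset.sum_congr rfl fun j hj ↦ ?_
  have factorial_add : ((j + m).factorial : ℂ) = m.factorial * (m + 1).ascFactorial j := by
    rw [add_comm, ← Nat.factorial_mul_ascFactorial, Nat.cast_mul]
  have one_sub_pow_eq : (1 - t) ^ (n + m + 1) = (1 - t) ^ (j + m + 1) * (1 - t) ^ (n - j) := by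
    rw [← pow_add]
    congr 1
    have := Finset.mem_range.mp hj
    lia
  have one_sub_ne_zero : 1 - t ≠ 0 := (isUnit_one_sub_of_norm_lt_one ht).ne_zero
  rw [factorial_add, one_sub_pow_eq, ascPochhammer_nat_eq_ascFactorial,
    stirlingS2_eq_stirlingSecond]
  simp only [map_mul, map_pow, map_sub, map_neg, map_one, map_natCast, aeval_X]
  field_simp

lemma eq_of_infinite_aeval_eq {R S : Type*} [CommRing R] [CommRing S] [IsDomain S] [Algebra R S]
    [FaithfulSMul R S] (p q : R[X]) (h : {x : S | aeval x p = aeval x q}.Infinite) : p = q := by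
  refine map_injective _ (FaithfulSMul.algebraMap_injective R S) ?_
  exact eq_of_infinite_eval_eq _ _ (by simpa only [eval_map_algebraMap] using h)

/-- For `n, m ≥ 1`, the polynomial `A_{n,m}` — the unique real polynomial of degree `n`
with `(d^m/dt^m) Li_{−n}(t) = A_{n,m}(t)/(1−t)^{n+m+1}` on the unit disk — has the
closed form `A_{n,m}(t) = m! ∑_{j=0}^{n} (−1)^{n+j} (m+1)_j S(n+1, j+1) (1−t)^{n−j}`,
where `(m+1)_j` is the Pochhammer symbol. -/
theorem statement8 (n m : ℕ) (hn : 1 ≤ n) (hm : 1 ≤ m) (A : Polynomial ℝ)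
    (hdeg : A.natDegree = n)
    (hA : ∀ t : ℂ, ‖t‖ < 1 →
      iteratedDeriv m (fbhLi n) t = Polynomial.aeval t A / (1 - t) ^ (n + m + 1)) :
    A = C (Nat.factorial m : ℝ) * ∑ j ∈ Finset.range (n + 1),
      C ((-1 : ℝ) ^ (n + j) * (((ascPochhammer ℕ j).eval (m + 1) : ℕ) : ℝ) *
          stirlingS2 (n + 1) (j + 1)) * (1 - X) ^ (n - j) := by
  refine eq_of_infinite_aeval_eq A (polylogDerivNumerator n m)
    ((infinite_of_mem_nhds (0 : ℂ) (Metric.ball_mem_nhds 0 one_pos)).mono fun t ht ↦ ?_)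
  rw [mem_ball_zero_iff] at ht
  have one_sub_ne_zero : 1 - t ≠ 0 := (isUnit_one_sub_of_norm_lt_one ht).ne_zero
  have h := (hA t ht).symm.trans (iteratedDeriv_fbhLi_eq_aeval_div n m ht)
  exact (div_left_inj' (pow_ne_zero _ one_sub_ne_zero)).mp h
end
end

section
/- For every fixed integer n ≥ 1, the sequence (r_{n,m})_{m≥1}, where r_{n,m} is the largest real root of A_{n,m}, is strictly decreasing in m and tends to −∞ as m → ∞. -/
/-!
In the variable `u = (1 - t)⁻¹` the operators `t d/dt` and `d/dt` become `u (u - 1) d/du` and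
`u² d/du`, so `Li_{-n}` and its derivatives are polynomials in `u`. Both operators preserve the
real-rooted polynomials whose roots lie in `[0, 1]` and are simple apart from `0`: a nonzero
critical point lies strictly between two roots, and it is simple by Laguerre's identity. In
particular the largest root in `u`, which corresponds to the largest root in `t = 1 - u⁻¹`,
strictly decreases under `u² d/du`. Differentiation preserves the mean of the roots, so after
`m` derivatives their sum is `n (n + 1) / (2 (n + m))`, which bounds the largest root and tends
to `0`.
-/

open Polynomial

noncomputable section

lemma nextCoeff_derivative {R : Type*} [CommRing R] [IsAddTorsionFree R] (P : R[X]) :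
    (derivative P).nextCoeff = (P.natDegree - 1) * P.nextCoeff := by
  rcases hd : P.natDegree with - | - | d
  · simp [nextCoeff, hd]
  · simp [nextCoeff, hd, natDegree_derivative]
  · simp only [nextCoeff, natDegree_derivative, hd, coeff_derivative]
    simp [mul_comm]

section RootSum

variable {R : Type*} [CommRing R] [IsDomain R] [IsAddTorsionFree R] {P Q : R[X]}

lemma natDegree_mul_sum_roots_derivative (hP : P.Splits) (hP' : (derivative P).Splits) :
    P.natDegree * (derivative P).roots.sum = (P.natDegree - 1) * P.roots.sum := by
  rcases eq_or_ne P 0 with rfl | hP0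
  · simp
  have hnext := nextCoeff_derivative P
  rw [hP.nextCoeff_eq_neg_sum_roots_mul_leadingCoeff,
    hP'.nextCoeff_eq_neg_sum_roots_mul_leadingCoeff, leadingCoeff_derivative] at hnext
  refine mul_left_cancel₀ (leadingCoeff_ne_zero.2 hP0) ?_
  linear_combination -hnext

lemma natDegree_mul_sum_roots_mul_derivative (hQ : Q ≠ 0) (hP : P.Splits)
    (hP' : (derivative P).Splits) (hdeg : P.natDegree ≠ 0) :
    P.natDegree * (Q * derivative P).roots.sum =
      P.natDegree * Q.roots.sum + (P.natDegree - 1) * P.roots.sum := by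
  have hne : Q * derivative P ≠ 0 := mul_ne_zero hQ (by simpa using hdeg)
  rw [roots_mul hne, Multiset.sum_add, mul_add, natDegree_mul_sum_roots_derivative hP hP']

lemma natDegree_mul_derivative_add_one (hQ : Q ≠ 0) (hdeg : P.natDegree ≠ 0) :
    (Q * derivative P).natDegree + 1 = Q.natDegree + P.natDegree := by
  rw [natDegree_mul hQ (by simpa using hdeg), natDegree_derivative]
  lia

end RootSum

section Splits

variable {K : Type*} [Field K] {P : K[X]} {x : K}

lemma laguerre_identity_of_splits (hP : P.Splits) (hx : P.eval x ≠ 0) :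
    (derivative P).eval x ^ 2 - P.eval x * (derivative (derivative P)).eval x =
      P.eval x ^ 2 * (P.roots.map fun a ↦ (1 / (x - a)) ^ 2).sum := by
  induction hP using Submonoid.closure_induction with
  | mem f hf =>
    rcases hf with ⟨c, rfl⟩ | ⟨a, rfl⟩
    · simp
    · have hxa : x + a ≠ 0 := by simpa using hx
      simp [hxa]
  | one => simp
  | mul f g _ _ ihf ihg =>
    rw [eval_mul] at hx
    have hfg : f * g ≠ 0 := fun h ↦ hx (by rw [← eval_mul, h, eval_zero])
    simp only [derivative_mul, derivative_add, eval_add, eval_mul, roots_mul hfg,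
      Multiset.map_add, Multiset.sum_add]
    linear_combination g.eval x ^ 2 * ihf (left_ne_zero_of_mul hx) +
      f.eval x ^ 2 * ihg (right_ne_zero_of_mul hx)

variable [LinearOrder K] [IsStrictOrderedRing K]

lemma exists_isRoot_lt_and_gt_of_eval_derivative_eq_zero (hP : P.Splits)
    (hdeg : P.natDegree ≠ 0) (hx : P.eval x ≠ 0) (hx' : (derivative P).eval x = 0) :
    (∃ a < x, P.IsRoot a) ∧ ∃ b > x, P.IsRoot b := by
  have hsum : (P.roots.map fun a ↦ 1 / (x - a)).sum = 0 := by
    rw [← hP.eval_derivative_div_eval_of_ne_zero hx, hx', zero_div]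
  have hne : ∀ a, P.IsRoot a → a ≠ x := fun a ha hax ↦ hx (hax ▸ ha)
  have hzero : (P.roots.map fun _ ↦ (0 : K)).sum = 0 := Multiset.sum_map_zero
  constructor <;> by_contra! hside
  · refine absurd (hsum.trans hzero.symm) (Multiset.sum_lt_sum_of_nonempty
      (hP.roots_ne_zero hdeg) fun a ha ↦ one_div_neg.2 (sub_neg.2 ?_)).ne
    have hroot := isRoot_of_mem_roots ha
    exact (le_of_not_gt fun hlt ↦ hside a hlt hroot).lt_of_ne' (hne a hroot)
  · refine absurd (hsum.trans hzero.symm) (Multiset.sum_lt_sum_of_nonempty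
      (hP.roots_ne_zero hdeg) fun a ha ↦ one_div_pos.2 (sub_pos.2 ?_)).ne'
    have hroot := isRoot_of_mem_roots ha
    exact (le_of_not_gt fun hlt ↦ hside a hlt hroot).lt_of_ne (hne a hroot)

lemma eval_derivative_derivative_ne_zero (hP : P.Splits) (hdeg : P.natDegree ≠ 0)
    (hx : P.eval x ≠ 0) (hx' : (derivative P).eval x = 0) :
    (derivative (derivative P)).eval x ≠ 0 := by
  intro hx''
  have hsq : ∀ a ∈ P.roots, 0 < (1 / (x - a)) ^ 2 := fun a ha ↦ by
    have hxa : x - a ≠ 0 := sub_ne_zero.2 (by rintro rfl; exact hx (isRoot_of_mem_roots ha))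
    positivity
  have hpos : 0 < (P.roots.map fun a ↦ (1 / (x - a)) ^ 2).sum := by
    simpa only [Multiset.sum_map_zero] using
      Multiset.sum_lt_sum_of_nonempty (hP.roots_ne_zero hdeg) hsq
  have hlaguerre := laguerre_identity_of_splits hP hx
  rw [hx', hx'', mul_zero, sub_zero, zero_pow two_ne_zero] at hlaguerre
  exact (mul_pos (by positivity) hpos).ne hlaguerre

end Splits

lemma splits_derivative {P : ℝ[X]} (hP : P.Splits) : (derivative P).Splits := by
  refine splits_iff_card_roots.2 (le_antisymm (card_roots' _) ?_)
  have hrolle := card_roots_le_derivative P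
  rw [← hP.natDegree_eq_card_roots] at hrolle
  rw [natDegree_derivative]
  lia

/-- Nonconstant real-rooted polynomials whose roots lie in `[0, 1]` and are simple except possibly
at `0`: the class of polynomials in `u = (1 - t)⁻¹` that contains the derivatives of
polylogarithms. -/
structure HasSimpleUnitRoots (P : ℝ[X]) : Prop where
  natDegree_ne_zero : P.natDegree ≠ 0
  splits : P.Splits
  mem_Icc : ∀ x, P.IsRoot x → x ∈ Set.Icc 0 1
  eval_derivative_ne_zero : ∀ x ≠ 0, P.IsRoot x → (derivative P).eval x ≠ 0

lemma hasSimpleUnitRoots_X : HasSimpleUnitRoots X where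
  natDegree_ne_zero := by simp
  splits := .X
  mem_Icc := by simp
  eval_derivative_ne_zero := by simp

lemma hasSimpleUnitRoots_X_sq : HasSimpleUnitRoots (X ^ 2) where
  natDegree_ne_zero := by simp
  splits := .X_pow 2
  mem_Icc := by simp
  eval_derivative_ne_zero := by simp +contextual

lemma hasSimpleUnitRoots_X_mul_X_sub_one : HasSimpleUnitRoots (X * (X - C 1)) where
  natDegree_ne_zero := by rw [natDegree_mul X_ne_zero (X_sub_C_ne_zero 1)]; simp
  splits := .mul .X (.X_sub_C 1)
  mem_Icc := by
    intro x hx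
    rcases mul_eq_zero.1 (by simpa using hx : x * (x - 1) = 0) with h | h
    · simp [h]
    · simp [sub_eq_zero.1 h]
  eval_derivative_ne_zero := by
    intro x hx0 hx
    have hx1 : x - 1 = 0 := by simpa [hx0] using hx
    simp [hx1, hx0]

namespace HasSimpleUnitRoots

variable {P Q : ℝ[X]} {x u v : ℝ}

lemma ne_zero (hP : HasSimpleUnitRoots P) : P ≠ 0 :=
  ne_zero_of_natDegree_gt (Nat.pos_of_ne_zero hP.natDegree_ne_zero)

lemma eval_ne_zero_of_eval_derivative_eq_zero (hP : HasSimpleUnitRoots P) (hx : x ≠ 0)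
    (hx' : (derivative P).eval x = 0) : P.eval x ≠ 0 :=
  fun h ↦ hP.eval_derivative_ne_zero x hx h hx'

lemma exists_isRoot_lt_and_gt (hP : HasSimpleUnitRoots P) (hx : x ≠ 0)
    (hx' : (derivative P).eval x = 0) : (∃ a < x, P.IsRoot a) ∧ ∃ b > x, P.IsRoot b :=
  exists_isRoot_lt_and_gt_of_eval_derivative_eq_zero hP.splits hP.natDegree_ne_zero
    (hP.eval_ne_zero_of_eval_derivative_eq_zero hx hx') hx'

lemma mem_Ioo_of_eval_derivative_eq_zero (hP : HasSimpleUnitRoots P) (hx : x ≠ 0)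
    (hx' : (derivative P).eval x = 0) : x ∈ Set.Ioo 0 1 := by
  obtain ⟨⟨a, hax, ha⟩, b, hxb, hb⟩ := hP.exists_isRoot_lt_and_gt hx hx'
  exact ⟨(hP.mem_Icc a ha).1.trans_lt hax, hxb.trans_le (hP.mem_Icc b hb).2⟩

lemma mul_derivative (hQ : HasSimpleUnitRoots Q) (hQ01 : ∀ x ∈ Set.Ioo 0 1, ¬ Q.IsRoot x)
    (hP : HasSimpleUnitRoots P) : HasSimpleUnitRoots (Q * derivative P) where
  natDegree_ne_zero := by
    have hdeg := natDegree_mul_derivative_add_one hQ.ne_zero hP.natDegree_ne_zero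
    have := hQ.natDegree_ne_zero
    have := hP.natDegree_ne_zero
    lia
  splits := hQ.splits.mul (splits_derivative hP.splits)
  mem_Icc x hx := by
    rcases root_mul.1 hx with hQx | hPx
    · exact hQ.mem_Icc x hQx
    · rcases eq_or_ne x 0 with rfl | hx0
      · simp
      · exact Set.Ioo_subset_Icc_self (hP.mem_Ioo_of_eval_derivative_eq_zero hx0 hPx)
  eval_derivative_ne_zero x hx0 hx := by
    rw [derivative_mul, eval_add, eval_mul, eval_mul]
    by_cases hPx : (derivative P).eval x = 0
    · have hQx := hQ01 x (hP.mem_Ioo_of_eval_derivative_eq_zero hx0 hPx)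
      have hPx'' := eval_derivative_derivative_ne_zero hP.splits hP.natDegree_ne_zero
        (hP.eval_ne_zero_of_eval_derivative_eq_zero hx0 hPx) hPx
      rw [hPx, mul_zero, zero_add]
      exact mul_ne_zero hQx hPx''
    · have hQx : Q.eval x = 0 := (root_mul.1 hx).resolve_right hPx
      rw [hQx, zero_mul, add_zero]
      exact mul_ne_zero (hQ.eval_derivative_ne_zero x hx0 hQx) hPx

lemma X_sq_mul_derivative (hP : HasSimpleUnitRoots P) :
    HasSimpleUnitRoots (X ^ 2 * derivative P) :=
  hasSimpleUnitRoots_X_sq.mul_derivative (fun x hx ↦ by simp [hx.1.ne']) hP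

lemma X_mul_X_sub_one_mul_derivative (hP : HasSimpleUnitRoots P) :
    HasSimpleUnitRoots (X * (X - C 1) * derivative P) :=
  hasSimpleUnitRoots_X_mul_X_sub_one.mul_derivative
    (fun x hx ↦ by simp [hx.1.ne', sub_eq_zero, hx.2.ne]) hP

lemma lt_of_isRoot_X_sq_mul_derivative (hP : HasSimpleUnitRoots P)
    (hu : IsGreatest {u | P.IsRoot u} u) (hv0 : v ≠ 0) (hv : (X ^ 2 * derivative P).IsRoot v) :
    v < u := by
  have hv' : (derivative P).eval v = 0 := by simpa [hv0] using hv
  obtain ⟨-, b, hvb, hb⟩ := hP.exists_isRoot_lt_and_gt hv0 hv'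
  exact hvb.trans_le (hu.2 hb)

lemma le_sum_roots (hP : HasSimpleUnitRoots P) (hu : P.IsRoot u) : u ≤ P.roots.sum :=
  Multiset.single_le_sum (fun x hx ↦ (hP.mem_Icc x (isRoot_of_mem_roots hx)).1) u
    ((mem_roots hP.ne_zero).2 hu)

end HasSimpleUnitRoots

section Reverse

variable {K : Type*} [Field K]

lemma aeval_reverse {R : Type*} [CommSemiring R] [Algebra R K] (P : R[X]) {s : K} (hs : s ≠ 0) :
    aeval s P.reverse = s ^ P.natDegree * aeval s⁻¹ P := by
  let _ := invertibleOfNonzero (inv_ne_zero hs)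
  have h := eval₂_reverse_mul_pow (algebraMap R K) s⁻¹ P
  rw [invOf_eq_inv, inv_inv] at h
  rw [aeval_def, aeval_def, ← h, mul_left_comm, ← mul_pow, mul_inv_cancel₀ hs, one_pow, mul_one]

lemma isRoot_reverse_comp_one_sub_X {P : K[X]} (hP : P ≠ 0) {x : K} :
    (P.reverse.comp (1 - X)).IsRoot x ↔ x ≠ 1 ∧ P.IsRoot (1 - x)⁻¹ := by
  rw [IsRoot, eval_comp, eval_sub, eval_one, eval_X]
  rcases eq_or_ne x 1 with rfl | hx
  · simp [← coeff_zero_eq_eval_zero, hP]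
  · have hs : 1 - x ≠ 0 := sub_ne_zero.2 hx.symm
    rw [← coe_aeval_eq_eval, aeval_reverse P hs, coe_aeval_eq_eval]
    simp [hx, hs]

end Reverse

lemma HasSimpleUnitRoots.isGreatest_inv_one_sub {P : ℝ[X]} (hP : HasSimpleUnitRoots P) {r : ℝ}
    (hr : IsGreatest {x | (P.reverse.comp (1 - X)).IsRoot x} r) :
    r < 1 ∧ IsGreatest {u | P.IsRoot u} (1 - r)⁻¹ := by
  simp only [isRoot_reverse_comp_one_sub_X hP.ne_zero] at hr
  obtain ⟨⟨hr1, hroot⟩, hmax⟩ := hr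
  have hpos : 0 < 1 - r :=
    (inv_nonneg.1 (hP.mem_Icc _ hroot).1).lt_of_ne' (sub_ne_zero.2 hr1.symm)
  refine ⟨sub_pos.1 hpos, hroot, fun v hv ↦ ?_⟩
  rcases (hP.mem_Icc v hv).1.eq_or_lt with rfl | hv0
  · exact (inv_pos.2 hpos).le
  · have hle : 1 - v⁻¹ ≤ r := hmax ⟨by simp [hv0.ne'], by simpa using hv⟩
    exact (le_inv_comm₀ hv0 hpos).2 (sub_le_comm.1 hle)

lemma hasDerivAt_aeval_inv_one_sub {R 𝕜 : Type*} [CommSemiring R] [NontriviallyNormedField 𝕜]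
    [Algebra R 𝕜] (P : R[X]) {t : 𝕜} (ht : t ≠ 1) :
    HasDerivAt (fun z ↦ aeval (1 - z)⁻¹ P) (aeval (1 - t)⁻¹ (X ^ 2 * derivative P)) t := by
  have hinv : HasDerivAt (fun z : 𝕜 ↦ (1 - z)⁻¹) ((1 - t)⁻¹ ^ 2) t := by
    simpa using ((hasDerivAt_id t).const_sub 1).fun_inv (sub_ne_zero.2 ht.symm)
  refine ((P.hasDerivAt_aeval _).comp t hinv).congr_deriv ?_
  rw [map_mul, map_pow, aeval_X, mul_comm]

lemma fbhLi_succ (n : ℕ) {t : ℂ} (ht : ‖t‖ < 1) : fbhLi (n + 1) t = t * deriv (fbhLi n) t := by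
  obtain ⟨ρ, htρ, hρ1⟩ := exists_between ht
  have hρ0 : 0 ≤ ρ := (norm_nonneg t).trans htρ.le
  have hsummable : Summable fun k : ℕ ↦ (k : ℝ) ^ n * ρ ^ k :=
    summable_pow_mul_geometric_of_norm_lt_one n (by rwa [Real.norm_of_nonneg hρ0])
  have hbound (k : ℕ) (w : ℂ) (hw : w ∈ Metric.ball 0 ρ) :
      ‖(k : ℂ) ^ n * w ^ k‖ ≤ (k : ℝ) ^ n * ρ ^ k := by
    rw [norm_mul, norm_pow, norm_pow, Complex.norm_natCast]
    gcongr
    exact (mem_ball_zero_iff.1 hw).le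
  have hderiv : HasSum (fun k : ℕ ↦ deriv (fun w : ℂ ↦ (k : ℂ) ^ n * w ^ k) t)
      (deriv (fbhLi n) t) :=
    Complex.hasSum_deriv_of_summable_norm hsummable (fun k ↦ by fun_prop) Metric.isOpen_ball
      hbound (mem_ball_zero_iff.2 htρ)
  rw [← (hderiv.mul_left t).tsum_eq]
  refine tsum_congr fun k ↦ ?_
  rw [((hasDerivAt_pow k t).const_mul _).deriv]
  cases k with
  | zero => simp
  | succ k => rw [Nat.add_sub_cancel]; ring

/-- The polynomial `G` with `Li_{-n}(t) = G((1 - t)⁻¹)`. For `n = 0` the series includes its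
term `k = 0`, so `fbhLi 0 t = (1 - t)⁻¹`. -/
def polylogPoly : ℕ → ℝ[X]
  | 0 => X
  | n + 1 => X * (X - C 1) * derivative (polylogPoly n)

/-- The polynomial `G` with `(d^m/dt^m) Li_{-n}(t) = G((1 - t)⁻¹)`. -/
def polylogDerivPoly (n : ℕ) : ℕ → ℝ[X]
  | 0 => polylogPoly n
  | m + 1 => X ^ 2 * derivative (polylogDerivPoly n m)

lemma hasSimpleUnitRoots_polylogPoly (n : ℕ) : HasSimpleUnitRoots (polylogPoly n) := by
  induction n with
  | zero => exact hasSimpleUnitRoots_X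
  | succ n ih => exact ih.X_mul_X_sub_one_mul_derivative

lemma hasSimpleUnitRoots_polylogDerivPoly (n m : ℕ) :
    HasSimpleUnitRoots (polylogDerivPoly n m) := by
  induction m with
  | zero => exact hasSimpleUnitRoots_polylogPoly n
  | succ m ih => exact ih.X_sq_mul_derivative

lemma natDegree_polylogPoly (n : ℕ) : (polylogPoly n).natDegree = n + 1 := by
  induction n with
  | zero => exact natDegree_X
  | succ n ih =>
    have hdeg := natDegree_mul_derivative_add_one hasSimpleUnitRoots_X_mul_X_sub_one.ne_zero
      (hasSimpleUnitRoots_polylogPoly n).natDegree_ne_zero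
    rw [natDegree_mul X_ne_zero (X_sub_C_ne_zero 1), natDegree_X, natDegree_X_sub_C, ih] at hdeg
    rw [polylogPoly]
    lia

lemma natDegree_polylogDerivPoly (n m : ℕ) :
    (polylogDerivPoly n m).natDegree = n + m + 1 := by
  induction m with
  | zero => exact natDegree_polylogPoly n
  | succ m ih =>
    have hdeg := natDegree_mul_derivative_add_one hasSimpleUnitRoots_X_sq.ne_zero
      (hasSimpleUnitRoots_polylogDerivPoly n m).natDegree_ne_zero
    rw [natDegree_X_pow, ih] at hdeg
    rw [polylogDerivPoly]
    lia

lemma mul_sum_roots_polylogPoly (n : ℕ) :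
    n * (polylogPoly n).roots.sum = n * (n + 1) / 2 := by
  induction n with
  | zero => simp
  | succ n ih =>
    have hP := hasSimpleUnitRoots_polylogPoly n
    have hQ := hasSimpleUnitRoots_X_mul_X_sub_one.ne_zero
    have hsum := natDegree_mul_sum_roots_mul_derivative hQ hP.splits
      (splits_derivative hP.splits) hP.natDegree_ne_zero
    rw [roots_mul hQ, roots_X, roots_X_sub_C, natDegree_polylogPoly] at hsum
    simp only [Multiset.sum_add, Multiset.sum_singleton] at hsum
    rw [polylogPoly]
    push_cast at hsum ⊢
    linear_combination hsum + ih

lemma mul_sum_roots_polylogDerivPoly (n m : ℕ) :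
    (n + m) * (polylogDerivPoly n m).roots.sum = n * (n + 1) / 2 := by
  induction m with
  | zero => simpa using! mul_sum_roots_polylogPoly n
  | succ m ih =>
    have hP := hasSimpleUnitRoots_polylogDerivPoly n m
    have hsum := natDegree_mul_sum_roots_mul_derivative hasSimpleUnitRoots_X_sq.ne_zero hP.splits
      (splits_derivative hP.splits) hP.natDegree_ne_zero
    rw [roots_X_pow, natDegree_polylogDerivPoly] at hsum
    simp only [Multiset.sum_nsmul, Multiset.sum_singleton, smul_zero] at hsum
    rw [polylogDerivPoly]
    push_cast at hsum ⊢
    linear_combination hsum + ih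

lemma mul_le_of_isRoot_polylogDerivPoly {n m : ℕ} {u : ℝ} (hu : (polylogDerivPoly n m).IsRoot u) :
    (n + m) * u ≤ n * (n + 1) / 2 := by
  rw [← mul_sum_roots_polylogDerivPoly n m]
  gcongr
  exact (hasSimpleUnitRoots_polylogDerivPoly n m).le_sum_roots hu

lemma le_of_isRoot_polylogDerivPoly_inv_one_sub {n m : ℕ} (hn : n ≠ 0) {r : ℝ} (hr : r < 1)
    (hroot : (polylogDerivPoly n m).IsRoot (1 - r)⁻¹) :
    r ≤ 1 - (n + m) / (n * (n + 1) / 2) := by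
  have hle := mul_le_of_isRoot_polylogDerivPoly hroot
  rw [← div_eq_mul_inv, div_le_iff₀ (sub_pos.2 hr)] at hle
  rwa [le_sub_comm, div_le_iff₀' (by positivity)]

lemma tendsto_one_sub_add_div_atBot (a : ℝ) {c : ℝ} (hc : 0 < c) :
    Filter.Tendsto (fun m : ℕ ↦ 1 - (a + m) / c) Filter.atTop Filter.atBot := by
  have hadd : Filter.Tendsto (fun m : ℕ ↦ a + (m : ℝ)) Filter.atTop Filter.atTop :=
    Filter.tendsto_atTop_add_const_left _ a tendsto_natCast_atTop_atTop
  exact Filter.tendsto_atBot_add_const_left _ 1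
    (Filter.tendsto_neg_atTop_atBot.comp (hadd.atTop_div_const hc))

lemma ne_one_of_norm_lt_one {t : ℂ} (ht : ‖t‖ < 1) : t ≠ 1 := by
  rintro rfl
  simp at ht

lemma hasDerivAt_of_eq_aeval_inv_one_sub {f : ℂ → ℂ} {P : ℝ[X]}
    (hf : ∀ z, ‖z‖ < 1 → f z = aeval (1 - z)⁻¹ P) {t : ℂ} (ht : ‖t‖ < 1) :
    HasDerivAt f (aeval (1 - t)⁻¹ (X ^ 2 * derivative P)) t :=
  (hasDerivAt_aeval_inv_one_sub P (ne_one_of_norm_lt_one ht)).congr_of_eventuallyEq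
    ((continuous_norm.continuousAt.eventually_lt_const ht).mono hf)

lemma fbhLi_eq_aeval (n : ℕ) {t : ℂ} (ht : ‖t‖ < 1) :
    fbhLi n t = aeval (1 - t)⁻¹ (polylogPoly n) := by
  induction n generalizing t with
  | zero => simp [fbhLi, polylogPoly, tsum_geometric_of_norm_lt_one ht]
  | succ n ih =>
    have hs : 1 - t ≠ 0 := sub_ne_zero.2 (ne_one_of_norm_lt_one ht).symm
    rw [fbhLi_succ n ht, (hasDerivAt_of_eq_aeval_inv_one_sub (fun _ ↦ ih) ht).deriv, polylogPoly]
    simp only [map_mul, map_sub, map_pow, map_one, aeval_X]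
    field_simp
    ring

lemma iteratedDeriv_fbhLi_eq_aeval (n m : ℕ) {t : ℂ} (ht : ‖t‖ < 1) :
    iteratedDeriv m (fbhLi n) t = aeval (1 - t)⁻¹ (polylogDerivPoly n m) := by
  induction m generalizing t with
  | zero => rw [iteratedDeriv_zero, polylogDerivPoly, fbhLi_eq_aeval n ht]
  | succ m ih =>
    rw [iteratedDeriv_succ, polylogDerivPoly]
    exact (hasDerivAt_of_eq_aeval_inv_one_sub (fun _ ↦ ih) ht).deriv

lemma eq_reverse_polylogDerivPoly_comp {n m : ℕ} {A : ℝ[X]}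
    (hA : ∀ t : ℂ, ‖t‖ < 1 →
      iteratedDeriv m (fbhLi n) t = aeval t A / (1 - t) ^ (n + m + 1)) :
    A = (polylogDerivPoly n m).reverse.comp (1 - X) := by
  refine map_injective (algebraMap ℝ ℂ) (algebraMap ℝ ℂ).injective (eq_of_infinite_eval_eq _ _ ?_)
  refine (infinite_of_mem_nhds (0 : ℂ) (Metric.ball_mem_nhds 0 one_pos)).mono fun t ht ↦ ?_
  have ht1 : ‖t‖ < 1 := mem_ball_zero_iff.1 ht
  have hs : 1 - t ≠ 0 := sub_ne_zero.2 (ne_one_of_norm_lt_one ht1).symm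
  have hAt : aeval t A = aeval (1 - t) (polylogDerivPoly n m).reverse := by
    rw [aeval_reverse _ hs, natDegree_polylogDerivPoly, ← iteratedDeriv_fbhLi_eq_aeval n m ht1,
      hA t ht1, mul_div_cancel₀ _ (pow_ne_zero _ hs)]
  have hcomp : aeval t ((polylogDerivPoly n m).reverse.comp (1 - X)) =
      aeval (1 - t) (polylogDerivPoly n m).reverse := by
    rw [aeval_comp, map_sub, map_one, aeval_X]
  simpa only [← hcomp, aeval_def, eval₂_eq_eval_map] using! hAt

/-- Fix `n ≥ 1`. Let `A m` be the polynomial `A_{n,m}` (the degree-`n` real polynomial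
with `(d^m/dt^m) Li_{−n}(t) = A_{n,m}(t)/(1−t)^{n+m+1}` on the unit disk) and let
`r m` be its largest real root `r_{n,m}`. Then the sequence `(r m)_{m ≥ 1}` is
strictly decreasing and tends to `−∞` as `m → ∞`. -/
theorem statement16 (n : ℕ) (hn : 1 ≤ n) (A : ℕ → Polynomial ℝ) (r : ℕ → ℝ)
    (hdeg : ∀ m, 1 ≤ m → (A m).natDegree = n)
    (hA : ∀ m, 1 ≤ m → ∀ t : ℂ, ‖t‖ < 1 →
      iteratedDeriv m (fbhLi n) t = Polynomial.aeval t (A m) / (1 - t) ^ (n + m + 1))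
    (hr : ∀ m, 1 ≤ m → (A m).IsRoot (r m) ∧ ∀ x : ℝ, (A m).IsRoot x → x ≤ r m) :
    (∀ m, 1 ≤ m → r (m + 1) < r m) ∧ Filter.Tendsto r Filter.atTop Filter.atBot := by
  have hu (m : ℕ) (hm : 1 ≤ m) :
      r m < 1 ∧ IsGreatest {u | (polylogDerivPoly n m).IsRoot u} (1 - r m)⁻¹ := by
    refine (hasSimpleUnitRoots_polylogDerivPoly n m).isGreatest_inv_one_sub ?_
    rw [← eq_reverse_polylogDerivPoly_comp (hA m hm)]
    exact hr m hm
  refine ⟨fun m hm ↦ ?_, ?_⟩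
  · obtain ⟨hr1, hgreatest⟩ := hu m hm
    obtain ⟨hr1', hroot, -⟩ := hu (m + 1) (by lia)
    have hlt := (hasSimpleUnitRoots_polylogDerivPoly n m).lt_of_isRoot_X_sq_mul_derivative
      hgreatest (inv_pos.2 (sub_pos.2 hr1')).ne' hroot
    exact (sub_lt_sub_iff_left 1).1 ((inv_lt_inv₀ (sub_pos.2 hr1') (sub_pos.2 hr1)).1 hlt)
  · refine Filter.tendsto_atBot_mono' _ (Filter.eventually_atTop.2 ⟨1, fun m hm ↦ ?_⟩)
      (tendsto_one_sub_add_div_atBot n (by positivity : (0 : ℝ) < n * (n + 1) / 2))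
    obtain ⟨hr1, hroot, -⟩ := hu m hm
    exact le_of_isRoot_polylogDerivPoly_inv_one_sub (by lia) hr1 hroot
end
end
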